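/- Fix a finite graph G=(V,E), a nonempty family Γ of walks on G, and 1 < p < ∞. For each positive weight function σ:E→(0,∞), let ρ*_σ be the unique extremal density for Mod_p(Γ;σ), and set F(σ) = Mod_p(Γ;σ). Then F is differentiable with respect to the weights, with ∂F(σ)/∂σ(e) = ρ*_σ(e)^p for each e ∈ E; equivalently, for every direction η:E→ℝ, lim_{h→0⁺} (F(σ + hη) − F(σ))/h = Σ_{e∈E} η(e)·ρ*_σ(e)^p. -/

import Mathlib

/-!
The modulus `F(σ)` is the infimum over the fixed closed convex set `A` of admissible densities of
`energy σ ρ`, which is linear in `σ`; the result is the envelope theorem for this situation.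
Write `σ_h = σ + h η`.

* Testing `F(σ_h)` with the extremal density `ρ*` of `σ` gives
  `(F(σ_h) - F(σ)) / h ≤ ∑ η ρ*^p`.
* For `h > 0` take `ρ_h ∈ A` with `energy σ_h ρ_h < F(σ_h) + h²`. Testing `F(σ)` with `ρ_h` gives
  `(F(σ_h) - F(σ)) / h ≥ ∑ η ρ_h^p - h`.

It remains to see that `ρ_h → ρ*` as `h → 0⁺`. The densities `ρ_h` stay in a compact box, because
`σ_h ≥ σ / 2` for small `h`, and each of their cluster points is admissible with `σ`-energy at most
that of `ρ*`. Strict convexity of `t ↦ t^p` makes the minimizer unique, so `ρ*` is the only cluster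
point. The argument is carried out for an arbitrary closed convex set `A` of nonnegative densities
on a finite type.
-/

open scoped BigOperators

variable {V : Type*} [Fintype V] [DecidableEq V]

/-- The ρ-length of a walk: ℓ_ρ(γ) = Σ_{e∈E} N(γ,e) ρ(e), where N(γ,e) is the number
of times the walk γ traverses the edge e. -/
noncomputable def rhoLength (G : SimpleGraph V) [DecidableRel G.Adj]
    (ρ : G.edgeSet → ℝ) {u v : V} (w : G.Walk u v) : ℝ :=
  ∑ e : G.edgeSet, (w.edges.count ↑e : ℝ) * ρ e

/-- The admissible set A(Γ): densities that are nonnegative and give every walk of Γ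
ρ-length at least one. -/
def IsAdmissible (G : SimpleGraph V) [DecidableRel G.Adj]
    (Γ : Set (Σ (u : V) (v : V), G.Walk u v)) (ρ : G.edgeSet → ℝ) : Prop :=
  (∀ e, 0 ≤ ρ e) ∧ ∀ γ ∈ Γ, 1 ≤ rhoLength G ρ γ.2.2

/-- The p-energy ℰ_p(ρ) = Σ_{e∈E} σ(e) |ρ(e)|^p, for 1 ≤ p < ∞. -/
noncomputable def energy (G : SimpleGraph V) [DecidableRel G.Adj]
    (σ : G.edgeSet → ℝ) (p : ℝ) (ρ : G.edgeSet → ℝ) : ℝ :=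
  ∑ e : G.edgeSet, σ e * |ρ e| ^ p

/-- The ∞-energy ℰ_∞(ρ) = max_{e∈E} |ρ(e)|. -/
noncomputable def energyInf (G : SimpleGraph V) [DecidableRel G.Adj]
    (ρ : G.edgeSet → ℝ) : ℝ :=
  ⨆ e : G.edgeSet, |ρ e|

/-- The p-modulus Mod_p(Γ) = inf_{ρ ∈ A(Γ)} ℰ_p(ρ), for 1 ≤ p < ∞. -/
noncomputable def modulus (G : SimpleGraph V) [DecidableRel G.Adj]
    (σ : G.edgeSet → ℝ) (p : ℝ) (Γ : Set (Σ (u : V) (v : V), G.Walk u v)) : ℝ :=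
  sInf (energy G σ p '' {ρ | IsAdmissible G Γ ρ})

/-- The ∞-modulus Mod_∞(Γ) = inf_{ρ ∈ A(Γ)} ℰ_∞(ρ). -/
noncomputable def modulusInf (G : SimpleGraph V) [DecidableRel G.Adj]
    (Γ : Set (Σ (u : V) (v : V), G.Walk u v)) : ℝ :=
  sInf (energyInf G '' {ρ | IsAdmissible G Γ ρ})

/-- The connecting family Γ(s,t): all walks that start at s and end at t. -/
def connectingFamily (G : SimpleGraph V) (s t : V) :
    Set (Σ (u : V) (v : V), G.Walk u v) :=
  {γ | γ.1 = s ∧ γ.2.1 = t}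

/-- The minimum graph length ℓ(Γ) = inf_{γ ∈ Γ} ℓ(γ) (smallest number of hops). -/
noncomputable def minLength (G : SimpleGraph V)
    (Γ : Set (Σ (u : V) (v : V), G.Walk u v)) : ℕ :=
  sInf {n : ℕ | ∃ γ ∈ Γ, γ.2.2.length = n}

/-- |φ(x) - φ(y)|, the potential drop of φ : V → ℝ across an edge, as a function
on unordered pairs. -/
noncomputable def potDrop (φ : V → ℝ) : Sym2 V → ℝ :=
  Sym2.lift ⟨fun x y => |φ x - φ y|, fun x y => abs_sub_comm (φ x) (φ y)⟩

namespace ModulusGradient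

open Filter Topology

variable {E : Type*} [Fintype E]

/-- The `p`-energy on an arbitrary finite index type. -/
noncomputable def en (p : ℝ) (s r : E → ℝ) : ℝ := ∑ e, s e * |r e| ^ p

lemma en_nonneg {p : ℝ} {s r : E → ℝ} (hs : ∀ e, 0 ≤ s e) : 0 ≤ en p s r :=
  Finset.sum_nonneg fun e _ => mul_nonneg (hs e) (Real.rpow_nonneg (abs_nonneg _) _)

lemma en_add {p : ℝ} (s t r : E → ℝ) (h : ℝ) :
    en p (fun e => s e + h * t e) r = en p s r + h * en p t r := by
  simp only [en, Finset.mul_sum, ← Finset.sum_add_distrib]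
  exact Finset.sum_congr rfl fun e _ => by ring

lemma tendsto_en {p : ℝ} (hp : 0 < p) {ι : Type*} {l : Filter ι} {s r : ι → E → ℝ}
    {s₀ r₀ : E → ℝ} (hs : Tendsto s l (𝓝 s₀)) (hr : Tendsto r l (𝓝 r₀)) :
    Tendsto (fun i => en p (s i) (r i)) l (𝓝 (en p s₀ r₀)) := by
  rw [tendsto_pi_nhds] at hs hr
  exact tendsto_finsetSum _ fun e _ =>
    (hs e).mul ((hr e).abs.rpow_const (Or.inr hp.le))

/-- Energy minimizers over a convex set of nonnegative densities are unique, by strict convexity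
of `t ↦ t ^ p`. -/
lemma minimizer_unique {p : ℝ} (hp : 1 < p) {s : E → ℝ} (hs : ∀ e, 0 < s e)
    {A : Set (E → ℝ)} (hconv : Convex ℝ A) (hpos : ∀ r ∈ A, ∀ e, 0 ≤ r e)
    {r y : E → ℝ} (hr : r ∈ A) (hmin : ∀ q ∈ A, en p s r ≤ en p s q)
    (hy : y ∈ A) (hle : en p s y ≤ en p s r) : y = r := by
  by_contra hne
  obtain ⟨e₀, he₀⟩ := Function.ne_iff.mp hne
  have hm := hconv hy hr (by norm_num : (0 : ℝ) ≤ 1 / 2) (by norm_num : (0 : ℝ) ≤ 1 / 2)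
    (by norm_num)
  have hpt : ∀ e, |((1 / 2 : ℝ) • y + (1 / 2 : ℝ) • r) e| ^ p
      ≤ 1 / 2 * |y e| ^ p + 1 / 2 * |r e| ^ p := by
    intro e
    rw [abs_of_nonneg (hpos _ hm e), abs_of_nonneg (hpos _ hy e), abs_of_nonneg (hpos _ hr e)]
    exact (convexOn_rpow hp.le).2 (hpos _ hy e) (hpos _ hr e) (by norm_num) (by norm_num)
      (by norm_num)
  have hlt : |((1 / 2 : ℝ) • y + (1 / 2 : ℝ) • r) e₀| ^ p
      < 1 / 2 * |y e₀| ^ p + 1 / 2 * |r e₀| ^ p := by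
    rw [abs_of_nonneg (hpos _ hm e₀), abs_of_nonneg (hpos _ hy e₀), abs_of_nonneg (hpos _ hr e₀)]
    exact (strictConvexOn_rpow hp).2 (hpos _ hy e₀) (hpos _ hr e₀) he₀ (by norm_num)
      (by norm_num) (by norm_num)
  have hsum : en p s ((1 / 2 : ℝ) • y + (1 / 2 : ℝ) • r)
      < ∑ e, s e * (1 / 2 * |y e| ^ p + 1 / 2 * |r e| ^ p) :=
    Finset.sum_lt_sum (fun e _ => mul_le_mul_of_nonneg_left (hpt e) (hs e).le)
      ⟨e₀, Finset.mem_univ _, mul_lt_mul_of_pos_left hlt (hs e₀)⟩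
  have heq : ∑ e, s e * (1 / 2 * |y e| ^ p + 1 / 2 * |r e| ^ p)
      = 1 / 2 * en p s y + 1 / 2 * en p s r := by
    simp only [en, Finset.mul_sum, ← Finset.sum_add_distrib]
    exact Finset.sum_congr rfl fun e _ => by ring
  have := hmin _ hm
  linarith

lemma tendsto_weights {ι : Type*} (s t : ι → ℝ) :
    Tendsto (fun h : ℝ => fun e => s e + h * t e) (𝓝[>] 0) (𝓝 s) := by
  have hc : Continuous (fun h : ℝ => fun e => s e + h * t e) := by fun_prop
  have := hc.tendsto 0
  simp only [zero_mul, add_zero] at this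
  exact this.mono_left nhdsWithin_le_nhds

lemma tendsto_zero_right : Tendsto (fun h : ℝ => h) (𝓝[>] 0) (𝓝 0) :=
  tendsto_id.mono_left nhdsWithin_le_nhds

/-- Densities that are almost optimal for the perturbed weights converge to the minimizer. -/
lemma tendsto_almost_minimizer {p : ℝ} (hp : 1 < p) {s t : E → ℝ} (hs : ∀ e, 0 < s e)
    {A : Set (E → ℝ)} (hconv : Convex ℝ A) (hclosed : IsClosed A)
    (hpos : ∀ r ∈ A, ∀ e, 0 ≤ r e)
    {r : E → ℝ} (hr : r ∈ A) (hmin : ∀ q ∈ A, en p s r ≤ en p s q)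
    {q : ℝ → E → ℝ} (hq : ∀ h, q h ∈ A)
    (hle : ∀ᶠ h in 𝓝[>] (0 : ℝ),
      en p (fun e => s e + h * t e) (q h) ≤ en p (fun e => s e + h * t e) r + h ^ 2) :
    Tendsto q (𝓝[>] 0) (𝓝 r) := by
  have hp0 : 0 < p := by linarith
  have hw := tendsto_weights s t
  have hup : Tendsto (fun h : ℝ => en p (fun e => s e + h * t e) r + h ^ 2) (𝓝[>] 0)
      (𝓝 (en p s r)) := by
    simpa using (tendsto_en hp0 hw tendsto_const_nhds).add (tendsto_zero_right.pow 2)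
  set B : ℝ := en p s r + 1 with hB
  have hhalf : ∀ᶠ h in 𝓝[>] (0 : ℝ), ∀ e, s e / 2 < s e + h * t e :=
    eventually_all.2 fun e => (tendsto_pi_nhds.1 hw e).eventually_const_lt (half_lt_self (hs e))
  have hBev : ∀ᶠ h in 𝓝[>] (0 : ℝ), en p (fun e => s e + h * t e) r + h ^ 2 < B :=
    hup.eventually_lt_const (by rw [hB]; linarith)
  have hK : IsCompact (Set.Icc (0 : E → ℝ) (fun e => (2 * B / s e) ^ p⁻¹) ∩ A) :=
    isCompact_Icc.inter_right hclosed
  refine hK.tendsto_nhds_of_unique_mapClusterPt ?_ ?_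
  · filter_upwards [hhalf, hBev, hle] with h h1 h2 h3
    refine ⟨⟨fun e => hpos _ (hq h) e, fun e => ?_⟩, hq h⟩
    have hterm : (s e + h * t e) * |q h e| ^ p ≤ en p (fun e => s e + h * t e) (q h) :=
      Finset.single_le_sum (f := fun e => (s e + h * t e) * |q h e| ^ p)
        (fun e _ => mul_nonneg (by linarith [h1 e, hs e]) (Real.rpow_nonneg (abs_nonneg _) _))
        (Finset.mem_univ e)
    rw [abs_of_nonneg (hpos _ (hq h) e)] at hterm
    have hqp : 0 ≤ q h e ^ p := Real.rpow_nonneg (hpos _ (hq h) e) _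
    have hb : q h e ^ p ≤ 2 * B / s e := by
      rw [le_div_iff₀ (hs e)]
      nlinarith [mul_le_mul_of_nonneg_right (h1 e).le hqp]
    calc q h e = (q h e ^ p) ^ p⁻¹ := (Real.rpow_rpow_inv (hpos _ (hq h) e) hp0.ne').symm
      _ ≤ _ := Real.rpow_le_rpow hqp hb (inv_nonneg.2 hp0.le)
  · intro y hy hcl
    obtain ⟨U, hU, hUy⟩ := mapClusterPt_iff_ultrafilter.1 hcl
    exact minimizer_unique hp hs hconv hpos hr hmin hy.2
      (le_of_tendsto_of_tendsto (tendsto_en hp0 (hw.mono_left hU) hUy) (hup.mono_left hU)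
        (hle.filter_mono hU))

/-- Envelope theorem: the one-sided directional derivative in the weights of the minimal energy
over a closed convex set of nonnegative densities. -/
theorem tendsto_sInf_slope {p : ℝ} (hp : 1 < p) {s : E → ℝ} (t : E → ℝ) (hs : ∀ e, 0 < s e)
    {A : Set (E → ℝ)} (hconv : Convex ℝ A) (hclosed : IsClosed A)
    (hpos : ∀ r ∈ A, ∀ e, 0 ≤ r e)
    {r : E → ℝ} (hr : r ∈ A) (hmin : en p s r = sInf (en p s '' A)) :
    Tendsto (fun h : ℝ =>
        (sInf (en p (fun e => s e + h * t e) '' A) - sInf (en p s '' A)) / h)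
      (𝓝[>] 0) (𝓝 (en p t r)) := by
  have hp0 : 0 < p := by linarith
  have hbdd : ∀ s' : E → ℝ, (∀ e, 0 ≤ s' e) → BddBelow (en p s' '' A) := by
    rintro s' hs'
    exact ⟨0, by rintro _ ⟨q, -, rfl⟩; exact en_nonneg hs'⟩
  have hlb : ∀ q ∈ A, en p s r ≤ en p s q := fun q hq => by
    rw [hmin]; exact csInf_le (hbdd s fun e => (hs e).le) ⟨q, hq, rfl⟩
  have hex : ∀ h : ℝ, ∃ q ∈ A, 0 < h →
      en p (fun e => s e + h * t e) q
        < sInf (en p (fun e => s e + h * t e) '' A) + h ^ 2 := by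
    intro h
    by_cases hh : 0 < h
    · obtain ⟨_, ⟨q, hq, rfl⟩, hlt⟩ := exists_lt_of_csInf_lt
        (s := en p (fun e => s e + h * t e) '' A) ⟨_, r, hr, rfl⟩
        (lt_add_of_pos_right _ (pow_pos hh 2))
      exact ⟨q, hq, fun _ => hlt⟩
    · exact ⟨r, hr, fun h' => absurd h' hh⟩
  choose q hqA hq using hex
  have hpos_ev : ∀ᶠ h in 𝓝[>] (0 : ℝ), 0 < h := self_mem_nhdsWithin
  have hub : ∀ᶠ h in 𝓝[>] (0 : ℝ), sInf (en p (fun e => s e + h * t e) '' A)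
      ≤ en p (fun e => s e + h * t e) r := by
    have hw : ∀ᶠ h in 𝓝[>] (0 : ℝ), ∀ e, 0 < s e + h * t e :=
      eventually_all.2 fun e =>
        (tendsto_pi_nhds.1 (tendsto_weights s t) e).eventually_const_lt (hs e)
    filter_upwards [hw] with h h1
    exact csInf_le (hbdd _ fun e => (h1 e).le) ⟨r, hr, rfl⟩
  have hqlim : Tendsto q (𝓝[>] 0) (𝓝 r) := by
    refine tendsto_almost_minimizer (t := t) hp hs hconv hclosed hpos hr hlb hqA ?_
    filter_upwards [hpos_ev, hub] with h h0 h1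
    linarith [hq h h0]
  have hlow : Tendsto (fun h : ℝ => en p t (q h) - h) (𝓝[>] 0) (𝓝 (en p t r)) := by
    simpa using (tendsto_en hp0 (tendsto_const_nhds (x := t)) hqlim).sub tendsto_zero_right
  refine tendsto_of_tendsto_of_tendsto_of_le_of_le' hlow tendsto_const_nhds ?_ ?_
  · filter_upwards [hpos_ev] with h h0
    rw [le_div_iff₀ h0, ← hmin]
    have h1 := hq h h0
    rw [en_add] at h1
    nlinarith [hlb _ (hqA h)]
  · filter_upwards [hpos_ev, hub] with h h0 h1
    rw [div_le_iff₀ h0, ← hmin]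
    rw [en_add] at h1
    linarith

end ModulusGradient

lemma convex_setOf_isAdmissible (G : SimpleGraph V) [DecidableRel G.Adj]
    (Γ : Set (Σ (u : V) (v : V), G.Walk u v)) : Convex ℝ {ρ | IsAdmissible G Γ ρ} := by
  rintro x ⟨hx0, hx⟩ y ⟨hy0, hy⟩ a b ha hb hab
  refine ⟨fun e => add_nonneg (mul_nonneg ha (hx0 e)) (mul_nonneg hb (hy0 e)), fun γ hγ => ?_⟩
  have hlin : rhoLength G (a • x + b • y) γ.2.2
      = a * rhoLength G x γ.2.2 + b * rhoLength G y γ.2.2 := by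
    simp only [rhoLength, Finset.mul_sum, ← Finset.sum_add_distrib, Pi.add_apply, Pi.smul_apply,
      smul_eq_mul]
    exact Finset.sum_congr rfl fun e _ => by ring
  rw [hlin]
  nlinarith [mul_le_mul_of_nonneg_left (hx γ hγ) ha, mul_le_mul_of_nonneg_left (hy γ hγ) hb]

lemma isClosed_setOf_isAdmissible (G : SimpleGraph V) [DecidableRel G.Adj]
    (Γ : Set (Σ (u : V) (v : V), G.Walk u v)) : IsClosed {ρ | IsAdmissible G Γ ρ} := by
  simp only [IsAdmissible, Set.ofPred_and, Set.ofPred_forall]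
  refine (isClosed_iInter fun e => isClosed_le continuous_const (continuous_apply e)).inter
    (isClosed_iInter fun γ => isClosed_iInter fun _ => isClosed_le continuous_const ?_)
  unfold rhoLength
  fun_prop

/-- the modulus is differentiable in the weights, with
∂Mod_p(Γ;σ)/∂σ(e) = ρ*_σ(e)^p: for every direction η,
lim_{h→0⁺} (Mod_p(Γ;σ+hη) - Mod_p(Γ;σ))/h = Σ_e η(e) ρ*_σ(e)^p. -/
theorem modulus_gradient_in_sigma
    (G : SimpleGraph V) [DecidableRel G.Adj]
    (Γ : Set (Σ (u : V) (v : V), G.Walk u v))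
    (hne : Γ.Nonempty) (hΓ : ∀ γ ∈ Γ, 0 < γ.2.2.length)
    (p : ℝ) (hp : 1 < p)
    (σ : G.edgeSet → ℝ) (hσ : ∀ e, 0 < σ e)
    (ρstar : G.edgeSet → ℝ)
    (hadm : IsAdmissible G Γ ρstar)
    (hext : energy G σ p ρstar = modulus G σ p Γ) :
    ∀ η : G.edgeSet → ℝ,
      Filter.Tendsto
        (fun h : ℝ =>
          (modulus G (fun e => σ e + h * η e) p Γ - modulus G σ p Γ) / h)
        (nhdsWithin 0 (Set.Ioi 0))
        (nhds (∑ e : G.edgeSet, η e * ρstar e ^ p)) := by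
  intro η
  have key := ModulusGradient.tendsto_sInf_slope hp η hσ (convex_setOf_isAdmissible G Γ)
    (isClosed_setOf_isAdmissible G Γ) (fun r hr => hr.1) hadm hext
  have heq : ModulusGradient.en p η ρstar = ∑ e : G.edgeSet, η e * ρstar e ^ p :=
    Finset.sum_congr rfl fun e _ => by rw [abs_of_nonneg (hadm.1 e)]
  rw [heq] at key
  exact key
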